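/- Let s₀, s₁, s₂ ∈ ℝ, let ν ∈ ℝ³ be a unit vector, and let Q, ψ be real symmetric traceless 3×3 matrices. Define f_S′(Q) := s₁ ( Q ννᵀ + ννᵀ Q − (2/3) tr(Q ννᵀ) I₃ ) + (2/3) s₀ s₁ ( ννᵀ − (1/3) I₃ ) + 4 s₂ ( tr(Q²) − (2/3) s₀² ) Q. Then the real function t ↦ f_S(Q + t ψ) is differentiable at t = 0, with derivative equal to tr( f_S′(Q) ψ ). -/

import Mathlib

open Matrix

/-- Frobenius norm of a real 3×3 matrix: `‖A‖ = √(tr(Aᵀ A))`. -/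
noncomputable def frobNorm (A : Matrix (Fin 3) (Fin 3) ℝ) : ℝ :=
  Real.sqrt (Matrix.trace (Aᵀ * A))

/-- Surface energy density `f_S(Q) = s₁ ‖Q^{(s₀)} − P Q^{(s₀)}‖² + s₂ (‖Q^{(s₀)}‖² − s₀²)²`,
where `Q^{(s₀)} = Q + (s₀/3) I₃` and `P = I₃ − ν νᵀ`. -/
noncomputable def fS (s₀ s₁ s₂ : ℝ) (ν : Fin 3 → ℝ) (Q : Matrix (Fin 3) (Fin 3) ℝ) : ℝ :=
  s₁ * frobNorm ((Q + (s₀ / 3) • (1 : Matrix (Fin 3) (Fin 3) ℝ)) -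
      ((1 : Matrix (Fin 3) (Fin 3) ℝ) - vecMulVec ν ν) *
        (Q + (s₀ / 3) • (1 : Matrix (Fin 3) (Fin 3) ℝ))) ^ 2 +
  s₂ * (frobNorm (Q + (s₀ / 3) • (1 : Matrix (Fin 3) (Fin 3) ℝ)) ^ 2 - s₀ ^ 2) ^ 2


/-- `f_S′(Q) = s₁ (Q ννᵀ + ννᵀ Q − (2/3) tr(Q ννᵀ) I₃) + (2/3) s₀ s₁ (ννᵀ − (1/3) I₃)
    + 4 s₂ (tr(Q²) − (2/3) s₀²) Q`. -/
noncomputable def fSprime (s₀ s₁ s₂ : ℝ) (ν : Fin 3 → ℝ) (Q : Matrix (Fin 3) (Fin 3) ℝ) :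
    Matrix (Fin 3) (Fin 3) ℝ :=
  s₁ • (Q * vecMulVec ν ν + vecMulVec ν ν * Q -
      ((2 / 3 : ℝ) * Matrix.trace (Q * vecMulVec ν ν)) • (1 : Matrix (Fin 3) (Fin 3) ℝ)) +
    ((2 / 3 : ℝ) * s₀ * s₁) • (vecMulVec ν ν - (1 / 3 : ℝ) • (1 : Matrix (Fin 3) (Fin 3) ℝ)) +
    (4 * s₂ * (Matrix.trace (Q * Q) - (2 / 3 : ℝ) * s₀ ^ 2)) • Q

/-!
Since `I₃ − P = ννᵀ` is symmetric and idempotent, `f_S` is a polynomial in the squared Frobenius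
norms of `ννᵀ Q^{(s₀)}` and `Q^{(s₀)}`, so its derivative in direction `ψ` is the trace pairing of
`ψ` with the gradient `2 s₁ ννᵀ Q^{(s₀)} + 4 s₂ (‖Q^{(s₀)}‖² − s₀²) Q^{(s₀)}`. Pairing with a
symmetric traceless `ψ` only sees the symmetric traceless part of this gradient, which is `f_S′(Q)`.
-/

section General

variable {m n R : Type*}

theorem isSymm_vecMulVec_self [CommMagma R] (v : n → R) : (vecMulVec v v).IsSymm :=
  transpose_vecMulVec v v

theorem isIdempotentElem_vecMulVec_self [Fintype n] [CommSemiring R] {v : n → R} (hv : v ⬝ᵥ v = 1) :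
    IsIdempotentElem (vecMulVec v v) := by
  rw [IsIdempotentElem, vecMulVec_mul_vecMulVec, hv, one_smul]

theorem transpose_mul_mul_of_isSymm_of_isIdempotentElem [Fintype m] [CommSemiring R]
    {P : Matrix m m R} (hP : P.IsSymm) (hPP : IsIdempotentElem P) (A B : Matrix m n R) :
    (P * A)ᵀ * (P * B) = Aᵀ * P * B := by
  rw [transpose_mul, hP.eq, ← Matrix.mul_assoc, Matrix.mul_assoc Aᵀ, hPP.eq]

variable [Fintype n]

theorem trace_mul_mul_swap_of_isSymm [CommSemiring R] {A B C : Matrix n n R}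
    (hA : A.IsSymm) (hB : B.IsSymm) (hC : C.IsSymm) :
    trace (A * B * C) = trace (B * A * C) := by
  rw [← trace_transpose, transpose_mul, transpose_mul, hA.eq, hB.eq, hC.eq, trace_mul_comm]

variable [Fintype m]

theorem trace_transpose_mul_self_add_smul [CommSemiring R] (A B : Matrix m n R) (t : R) :
    trace ((A + t • B)ᵀ * (A + t • B)) =
      trace (Aᵀ * A) + t * (2 * trace (Aᵀ * B)) + t ^ 2 * trace (Bᵀ * B) := by
  have hBA : trace (Bᵀ * A) = trace (Aᵀ * B) := by
    rw [← trace_transpose, transpose_mul, transpose_transpose]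
  simp only [transpose_add, transpose_smul, Matrix.add_mul, Matrix.mul_add, Matrix.smul_mul,
    Matrix.mul_smul, trace_add, trace_smul, smul_eq_mul, hBA]
  ring

theorem hasDerivAt_trace_transpose_mul_self_add_smul (A B : Matrix m n ℝ) (t : ℝ) :
    HasDerivAt (fun t : ℝ => trace ((A + t • B)ᵀ * (A + t • B)))
      (2 * trace ((A + t • B)ᵀ * B)) t := by
  simp only [trace_transpose_mul_self_add_smul]
  have hlin := ((hasDerivAt_id t).mul_const (2 * trace (Aᵀ * B))).const_add (trace (Aᵀ * A))
  have hquad := (hasDerivAt_pow 2 t).mul_const (trace (Bᵀ * B))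
  refine (hlin.add hquad).congr_deriv ?_
  simp only [transpose_add, transpose_smul, Matrix.add_mul, Matrix.smul_mul, trace_add,
    trace_smul, smul_eq_mul]
  push_cast
  ring

end General

theorem frobNorm_sq (A : Matrix (Fin 3) (Fin 3) ℝ) : frobNorm A ^ 2 = trace (Aᵀ * A) :=
  Real.sq_sqrt (posSemidef_conjTranspose_mul_self A).trace_nonneg

theorem hasDerivAt_frobNorm_sq_add_smul (A B : Matrix (Fin 3) (Fin 3) ℝ) (t : ℝ) :
    HasDerivAt (fun t : ℝ => frobNorm (A + t • B) ^ 2) (2 * trace ((A + t • B)ᵀ * B)) t := by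
  simpa only [frobNorm_sq] using hasDerivAt_trace_transpose_mul_self_add_smul A B t

/-- The matrix `Q^{(s₀)} = Q + (s₀/3) I₃`, in terms of which the surface energy is defined. -/
noncomputable def shiftedMatrix (s₀ : ℝ) (Q : Matrix (Fin 3) (Fin 3) ℝ) :
    Matrix (Fin 3) (Fin 3) ℝ :=
  Q + (s₀ / 3) • (1 : Matrix (Fin 3) (Fin 3) ℝ)

section SurfaceEnergy

variable (s₀ s₁ s₂ : ℝ) (ν : Fin 3 → ℝ) {Q ψ : Matrix (Fin 3) (Fin 3) ℝ}

theorem shiftedMatrix_add (Q A : Matrix (Fin 3) (Fin 3) ℝ) :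
    shiftedMatrix s₀ (Q + A) = shiftedMatrix s₀ Q + A :=
  add_right_comm Q A _

theorem isSymm_shiftedMatrix (hQ : Q.IsSymm) : (shiftedMatrix s₀ Q).IsSymm :=
  hQ.add (isSymm_one.smul _)

theorem trace_shiftedMatrix_mul (Q A : Matrix (Fin 3) (Fin 3) ℝ) :
    trace (shiftedMatrix s₀ Q * A) = trace (Q * A) + s₀ / 3 * trace A := by
  rw [shiftedMatrix, add_mul, smul_mul, one_mul, trace_add, trace_smul, smul_eq_mul]

theorem frobNorm_shiftedMatrix_sq (hQ : Q.IsSymm) (hQtr : trace Q = 0) :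
    frobNorm (shiftedMatrix s₀ Q) ^ 2 = trace (Q * Q) + s₀ ^ 2 / 3 := by
  have htrace : trace (shiftedMatrix s₀ Q) = s₀ := by
    simp [shiftedMatrix, hQtr]
  have hmul : trace (Q * shiftedMatrix s₀ Q) = trace (Q * Q) := by
    rw [trace_mul_comm, trace_shiftedMatrix_mul, hQtr, mul_zero, add_zero]
  rw [frobNorm_sq, (isSymm_shiftedMatrix s₀ hQ).eq, trace_shiftedMatrix_mul, hmul, htrace]
  ring

theorem fS_eq_frobNorm_vecMulVec_mul (Q : Matrix (Fin 3) (Fin 3) ℝ) :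
    fS s₀ s₁ s₂ ν Q =
      s₁ * frobNorm (vecMulVec ν ν * shiftedMatrix s₀ Q) ^ 2 +
        s₂ * (frobNorm (shiftedMatrix s₀ Q) ^ 2 - s₀ ^ 2) ^ 2 := by
  rw [fS, sub_mul, one_mul, sub_sub_cancel, shiftedMatrix]

theorem hasDerivAt_fS_add_smul (Q ψ : Matrix (Fin 3) (Fin 3) ℝ) :
    HasDerivAt (fun t : ℝ => fS s₀ s₁ s₂ ν (Q + t • ψ))
      (s₁ * (2 * trace ((vecMulVec ν ν * shiftedMatrix s₀ Q)ᵀ * (vecMulVec ν ν * ψ))) +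
        s₂ * (2 * (frobNorm (shiftedMatrix s₀ Q) ^ 2 - s₀ ^ 2) *
          (2 * trace ((shiftedMatrix s₀ Q)ᵀ * ψ)))) 0 := by
  simp only [fS_eq_frobNorm_vecMulVec_mul, shiftedMatrix_add, mul_add, Matrix.mul_smul]
  have hnormal := hasDerivAt_frobNorm_sq_add_smul
    (vecMulVec ν ν * shiftedMatrix s₀ Q) (vecMulVec ν ν * ψ) 0
  have hpenalty := ((hasDerivAt_frobNorm_sq_add_smul (shiftedMatrix s₀ Q) ψ 0).sub_const
    (s₀ ^ 2)).pow 2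
  refine ((hnormal.const_mul s₁).add (hpenalty.const_mul s₂)).congr_deriv ?_
  simp

theorem trace_fSprime_mul (hQ : Q.IsSymm) (hψ : ψ.IsSymm) (hψtr : trace ψ = 0) :
    trace (fSprime s₀ s₁ s₂ ν Q * ψ) =
      2 * s₁ * trace (shiftedMatrix s₀ Q * (vecMulVec ν ν * ψ)) +
        4 * s₂ * (trace (Q * Q) - 2 / 3 * s₀ ^ 2) * trace (Q * ψ) := by
  have hswap := trace_mul_mul_swap_of_isSymm (isSymm_vecMulVec_self ν) hQ hψ
  simp only [fSprime, add_mul, sub_mul, smul_mul, one_mul, trace_add, trace_sub, trace_smul,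
    smul_eq_mul, hψtr, hswap, trace_shiftedMatrix_mul, ← mul_assoc Q]
  ring

end SurfaceEnergy

theorem stmt_5 (s₀ s₁ s₂ : ℝ) (ν : Fin 3 → ℝ) (hν : ν ⬝ᵥ ν = 1)
    (Q ψ : Matrix (Fin 3) (Fin 3) ℝ)
    (hQsymm : Qᵀ = Q) (hQtr : Matrix.trace Q = 0)
    (hψsymm : ψᵀ = ψ) (hψtr : Matrix.trace ψ = 0) :
    HasDerivAt (fun t : ℝ => fS s₀ s₁ s₂ ν (Q + t • ψ))
      (Matrix.trace (fSprime s₀ s₁ s₂ ν Q * ψ)) 0 := by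
  have hnormal : (vecMulVec ν ν * shiftedMatrix s₀ Q)ᵀ * (vecMulVec ν ν * ψ) =
      shiftedMatrix s₀ Q * (vecMulVec ν ν * ψ) := by
    rw [transpose_mul_mul_of_isSymm_of_isIdempotentElem (isSymm_vecMulVec_self ν)
      (isIdempotentElem_vecMulVec_self hν), (isSymm_shiftedMatrix s₀ hQsymm).eq, mul_assoc]
  have hpenalty : trace ((shiftedMatrix s₀ Q)ᵀ * ψ) = trace (Q * ψ) := by
    rw [(isSymm_shiftedMatrix s₀ hQsymm).eq, trace_shiftedMatrix_mul, hψtr, mul_zero, add_zero]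
  refine (hasDerivAt_fS_add_smul s₀ s₁ s₂ ν Q ψ).congr_deriv ?_
  rw [hnormal, hpenalty, frobNorm_shiftedMatrix_sq s₀ hQsymm hQtr,
    trace_fSprime_mul s₀ s₁ s₂ ν hQsymm hψsymm hψtr]
  ring
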